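/- Let χ be a sentence of dependence logic not containing the variables y,v,u,u'. Let 𝔄 be a model with at least two elements, let Y be a unary relation symbol occurring neither in χ nor in the vocabulary of 𝔄, and let S ⊆ A. Let ({∅}, V) be a suitable pair for 𝔄, S, (y,v,u,u') and (χ,χ), where {∅} is the team containing only the empty assignment. Then (𝔄, Y↦S), {∅} ⊨ χ if and only if 𝔄, V ⊨ T_Y^y(χ). -/

import Mathlib

/- STATEMENT 8: Lemma on the translation T_Y^y from dependence logic to D⁺. -/

/-- Assignments with a finite domain: a variable outside the domain is sent to `none`. -/
abbrev PAssign (A : Type) := ℕ → Option A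

/-- `s[a/x]`. -/
def pupdate {A : Type} (s : PAssign A) (x : ℕ) (a : A) : PAssign A :=
  fun w => if w = x then some a else s w

/-- A model for a purely relational vocabulary `σ` with arities `ar`. -/
structure TModel (σ : Type) (ar : σ → ℕ) : Type 1 where
  A : Type
  ne : Nonempty A
  rel : ∀ R : σ, (Fin (ar R) → A) → Prop

/-- Formulas of D⁺: first-order logic in negation normal form extended with dependence,
conditional independence, inclusion and exclusion atoms. -/
inductive TLForm (σ : Type) (ar : σ → ℕ) : Type
  | rel (R : σ) (ts : Fin (ar R) → ℕ)
  | nrel (R : σ) (ts : Fin (ar R) → ℕ)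
  | eq (x y : ℕ)
  | neq (x y : ℕ)
  | dep (k : ℕ) (xs : Fin k → ℕ) (x : ℕ)                          -- =(x₁,...,x_k,x)
  | incl (k : ℕ) (xs ys : Fin k → ℕ)                              -- x̄ ⊆ ȳ
  | excl (k : ℕ) (xs ys : Fin k → ℕ)                              -- x̄ | ȳ
  | cindep (k m p : ℕ) (xs : Fin k → ℕ) (zs : Fin m → ℕ) (ys : Fin p → ℕ)  -- x̄ ⊥_{z̄} ȳ
  | and (φ ψ : TLForm σ ar)
  | or (φ ψ : TLForm σ ar)
  | all (x : ℕ) (φ : TLForm σ ar)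
  | ex (x : ℕ) (φ : TLForm σ ar)

/-- Lax team semantics for D⁺. -/
def TSat {σ : Type} {ar : σ → ℕ} (M : TModel σ ar) : Set (PAssign M.A) → TLForm σ ar → Prop
  | U, .rel R ts => ∀ s ∈ U, ∃ vv : Fin (ar R) → M.A,
      (∀ i, s (ts i) = some (vv i)) ∧ M.rel R vv
  | U, .nrel R ts => ∀ s ∈ U, ∃ vv : Fin (ar R) → M.A,
      (∀ i, s (ts i) = some (vv i)) ∧ ¬ M.rel R vv
  | U, .eq x y => ∀ s ∈ U, ∃ a : M.A, s x = some a ∧ s y = some a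
  | U, .neq x y => ∀ s ∈ U, ∃ a b : M.A, s x = some a ∧ s y = some b ∧ a ≠ b
  | U, .dep _ xs x => ∀ s ∈ U, ∀ t ∈ U, (∀ i, s (xs i) = t (xs i)) → s x = t x
  | U, .incl _ xs ys => ∀ s ∈ U, ∃ t ∈ U, ∀ i, t (ys i) = s (xs i)
  | U, .excl _ xs ys => ∀ s ∈ U, ∀ t ∈ U, ¬ (∀ i, s (xs i) = t (ys i))
  | U, .cindep _ _ _ xs zs ys => ∀ s ∈ U, ∀ s' ∈ U, (∀ i, s (zs i) = s' (zs i)) →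
      ∃ t ∈ U, (∀ i, t (xs i) = s (xs i)) ∧ (∀ i, t (zs i) = s (zs i)) ∧
        (∀ i, t (ys i) = s' (ys i))
  | U, .and φ ψ => TSat M U φ ∧ TSat M U ψ
  | U, .or φ ψ => ∃ U₀ U₁ : Set (PAssign M.A),
      U₀ ⊆ U ∧ U₁ ⊆ U ∧ U₀ ∪ U₁ = U ∧ TSat M U₀ φ ∧ TSat M U₁ ψ
  | U, .all x φ => TSat M {t | ∃ s ∈ U, ∃ a : M.A, t = pupdate s x a} φ
  | U, .ex x φ => ∃ f : PAssign M.A → Set M.A, (∀ s ∈ U, (f s).Nonempty) ∧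
      TSat M {t | ∃ s ∈ U, ∃ a ∈ f s, t = pupdate s x a} φ


/-- Free variables of a D⁺ formula. -/
def TLForm.freeVars {σ : Type} {ar : σ → ℕ} : TLForm σ ar → Finset ℕ
  | .rel _ ts => Finset.univ.image ts
  | .nrel _ ts => Finset.univ.image ts
  | .eq x y => {x, y}
  | .neq x y => {x, y}
  | .dep _ xs x => insert x (Finset.univ.image xs)
  | .incl _ xs ys => Finset.univ.image xs ∪ Finset.univ.image ys
  | .excl _ xs ys => Finset.univ.image xs ∪ Finset.univ.image ys
  | .cindep _ _ _ xs zs ys =>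
      Finset.univ.image xs ∪ Finset.univ.image zs ∪ Finset.univ.image ys
  | .and φ ψ => φ.freeVars ∪ ψ.freeVars
  | .or φ ψ => φ.freeVars ∪ ψ.freeVars
  | .all x φ => φ.freeVars.erase x
  | .ex x φ => φ.freeVars.erase x

/-- All variables occurring in a D⁺ formula (free or bound). -/
def TLForm.vars {σ : Type} {ar : σ → ℕ} : TLForm σ ar → Finset ℕ
  | .rel _ ts => Finset.univ.image ts
  | .nrel _ ts => Finset.univ.image ts
  | .eq x y => {x, y}
  | .neq x y => {x, y}
  | .dep _ xs x => insert x (Finset.univ.image xs)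
  | .incl _ xs ys => Finset.univ.image xs ∪ Finset.univ.image ys
  | .excl _ xs ys => Finset.univ.image xs ∪ Finset.univ.image ys
  | .cindep _ _ _ xs zs ys =>
      Finset.univ.image xs ∪ Finset.univ.image zs ∪ Finset.univ.image ys
  | .and φ ψ => φ.vars ∪ ψ.vars
  | .or φ ψ => φ.vars ∪ ψ.vars
  | .all x φ => insert x φ.vars
  | .ex x φ => insert x φ.vars

/-- The formula is a formula of dependence logic: it uses only first-order constructs
and dependence atoms. -/
def TLForm.IsDL {σ : Type} {ar : σ → ℕ} : TLForm σ ar → Prop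
  | .rel _ _ => True
  | .nrel _ _ => True
  | .eq _ _ => True
  | .neq _ _ => True
  | .dep _ _ _ => True
  | .incl _ _ _ => False
  | .excl _ _ _ => False
  | .cindep _ _ _ _ _ _ => False
  | .and φ ψ => φ.IsDL ∧ ψ.IsDL
  | .or φ ψ => φ.IsDL ∧ ψ.IsDL
  | .all _ φ => φ.IsDL
  | .ex _ φ => φ.IsDL

/-- The relation symbol `R₀` occurs in the formula. -/
def TLForm.UsesRel {σ : Type} {ar : σ → ℕ} (R₀ : σ) : TLForm σ ar → Prop
  | .rel R _ => R = R₀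
  | .nrel R _ => R = R₀
  | .and φ ψ => φ.UsesRel R₀ ∨ ψ.UsesRel R₀
  | .or φ ψ => φ.UsesRel R₀ ∨ ψ.UsesRel R₀
  | .all _ φ => φ.UsesRel R₀
  | .ex _ φ => φ.UsesRel R₀
  | _ => False

/-- The vocabulary `τ ∪ {Y}` where `Y` is a fresh unary relation symbol (`Sum.inr ()`). -/
def arY {σ : Type} (ar : σ → ℕ) : σ ⊕ Unit → ℕ := Sum.elim ar fun _ => 1

/-- The expansion `(𝔄, Y ↦ S)` of `𝔄` interpreting the fresh unary symbol `Y` as `S`. -/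
def expandY {σ : Type} {ar : σ → ℕ} (M : TModel σ ar) (S : Set M.A) :
    TModel (σ ⊕ Unit) (arY ar) where
  A := M.A
  ne := M.ne
  rel := fun R => match R with
    | Sum.inl R' => M.rel R'
    | Sum.inr _ => fun w => w ⟨0, Nat.one_pos⟩ ∈ S

/-- The translation `T_Y^y` (with fixed parameter variables `y,v,u,u'`) from dependence
logic over `τ ∪ {Y}` into D⁺ over `τ`.  The `Finset` argument accumulates the variables
quantified superordinate to the current subformula in the translated sentence, and the
`Bool` argument records whether the current subformula is subordinate to a disjunction. -/
def Ttr {σ : Type} {ar : σ → ℕ} (y v u u' : ℕ) :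
    Finset ℕ → Bool → TLForm (σ ⊕ Unit) (arY ar) → TLForm σ ar
  | _, _, .rel (Sum.inl R) ts => .rel R ts
  | _, _, .rel (Sum.inr _) ts => .incl 1 (fun _ => ts ⟨0, Nat.one_pos⟩) (fun _ => y)
  | _, _, .nrel (Sum.inl R) ts => .nrel R ts
  | _, _, .nrel (Sum.inr _) ts => .excl 1 (fun _ => ts ⟨0, Nat.one_pos⟩) (fun _ => y)
  | _, _, .eq x z => .eq x z
  | _, _, .neq x z => .neq x z
  | _, _, .dep k xs x => .dep k xs x
  | _, _, .incl k xs ys => .incl k xs ys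
  | _, _, .excl k xs ys => .excl k xs ys
  | _, _, .cindep k m p xs zs ys => .cindep k m p xs zs ys
  | zs, b, .and φ ψ => .and (Ttr y v u u' zs b φ) (Ttr y v u u' zs b ψ)
  | zs, _, .or φ ψ =>
      let l := zs.sort (· ≤ ·)
      .ex v (.and (.cindep 1 l.length 1 (fun _ => v) l.get (fun _ => y))
        (.or (.and (Ttr y v u u' zs true φ) (.eq v u))
             (.and (Ttr y v u u' zs true ψ) (.eq v u'))))
  | zs, b, .all x φ => .all x (Ttr y v u u' (insert x zs) b φ)
  | zs, b, .ex x φ =>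
      let l := ((zs.erase x).sort (· ≤ ·))
      if b then
        .ex x (.and
          (.cindep 1 l.length 2 (fun _ => x) l.get (fun i => if i.val = 0 then y else v))
          (Ttr y v u u' (insert x zs) b φ))
      else
        .ex x (.and (.cindep 1 l.length 1 (fun _ => x) l.get (fun _ => y))
          (Ttr y v u u' (insert x zs) b φ))

/-- The restriction `s ↾ Z` of an assignment to the variables in `Z`. -/
def restrictP {A : Type} (s : PAssign A) (Z : Finset ℕ) : PAssign A :=
  fun x => if x ∈ Z then s x else none

/-- `(U,V)` is a suitable pair for `𝔄` (with domain `A`), `S ⊆ A`, `(y,v,u,u')` and a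
(sub)formula whose superordinately quantified variables are `Z` and which is subordinate
to a disjunction iff `subDisj`:
(1) the domain of `U` is `Z`, and the domain of `V` is `Z ∪ {y,u,u'}`, with `v` added
iff `subDisj`; (2) `U = V ↾ Z`; (3) `V = X[S/y]` for some team `X`; (4) all assignments
in `V` agree on `u` and on `u'`, with distinct values: `s(u) = t(u) ≠ t(u') = s(u')`. -/
def SuitablePair (A : Type) (S : Set A) (y v u u' : ℕ) (Z : Finset ℕ) (subDisj : Bool)
    (U V : Set (PAssign A)) : Prop :=
  (∀ s ∈ U, ∀ x : ℕ, (s x ≠ none ↔ x ∈ Z)) ∧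
  (∀ s ∈ V, ∀ x : ℕ,
    (s x ≠ none ↔ x ∈ (if subDisj then Z ∪ {y, v, u, u'} else Z ∪ {y, u, u'}))) ∧
  U = (fun s => restrictP s Z) '' V ∧
  (∃ X : Set (PAssign A), V = {t | ∃ s ∈ X, ∃ a ∈ S, t = pupdate s y a}) ∧
  (∀ s ∈ V, ∀ t ∈ V, s u = t u ∧ t u ≠ t u' ∧ t u' = s u')

/-- The empty assignment. -/
def emptyA {A : Type} : PAssign A := fun _ => none

/-!
In a suitable pair `(U, V)` every assignment of `U` is extended in `V` by all values of `y` in `S`,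
so that `Y(x)` and `¬Y(x)` become inclusion and exclusion between `x` and `y`. A supplementation of
`V` that merely extended one of `U` could choose `x` depending on `y`; the independence atoms of the
translation exclude exactly this, and hence preserve the product structure `V = X[S/y]`. A
disjunction is turned into the choice of a label `v ∈ {u, u'}`, to which the same atoms apply, so
the parts into which the team splits are again products.
-/

section Assignments

variable {A : Type} {s t : PAssign A} {x w : ℕ} {a c : A} {Z : Finset ℕ}

theorem pupdate_self (s : PAssign A) (x : ℕ) (a : A) : pupdate s x a x = some a :=
  if_pos rfl

theorem pupdate_of_ne (h : w ≠ x) (s : PAssign A) (a : A) : pupdate s x a w = s w :=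
  if_neg h

theorem pupdate_comm (h : x ≠ w) (s : PAssign A) (a c : A) :
    pupdate (pupdate s x a) w c = pupdate (pupdate s w c) x a := by
  funext i
  grind [pupdate]

theorem pupdate_idem (s : PAssign A) (x : ℕ) (a c : A) :
    pupdate (pupdate s x a) x c = pupdate s x c := by
  funext i
  grind [pupdate]

theorem restrictP_of_mem (h : x ∈ Z) (s : PAssign A) : restrictP s Z x = s x :=
  if_pos h

theorem restrictP_eq_restrictP_iff : restrictP s Z = restrictP t Z ↔ ∀ z ∈ Z, s z = t z := by
  simp only [funext_iff, restrictP]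
  grind

theorem dependsOn_restrictP (Z : Finset ℕ) : DependsOn (fun s : PAssign A => restrictP s Z) Z :=
  fun _ _ h => restrictP_eq_restrictP_iff.2 h

theorem restrictP_pupdate_of_notMem (h : x ∉ Z) (s : PAssign A) (a : A) :
    restrictP (pupdate s x a) Z = restrictP s Z :=
  restrictP_eq_restrictP_iff.2 fun _ hz => pupdate_of_ne (ne_of_mem_of_not_mem hz h) s a

theorem restrictP_pupdate_insert (s : PAssign A) (Z : Finset ℕ) (x : ℕ) (a : A) :
    restrictP (pupdate s x a) (insert x Z) = pupdate (restrictP s Z) x a := by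
  funext i
  grind [restrictP, pupdate]

end Assignments

section Teams

variable {A : Type} {V W U : Set (PAssign A)} {x y : ℕ} {Z : Finset ℕ}

/-- The restriction `V ↾ Z` of a team to the variables in `Z`. -/
def restrictTeam (V : Set (PAssign A)) (Z : Finset ℕ) : Set (PAssign A) :=
  Set.image (fun s => restrictP s Z) V

/-- The duplicated team `V[A/x]`, in which `x` takes every value. -/
def duplicate (V : Set (PAssign A)) (x : ℕ) : Set (PAssign A) :=
  {t | ∃ s ∈ V, ∃ a, t = pupdate s x a}

/-- `W` is a supplemented team `V[f/x]` for some `f : V → 𝒫(A) ∖ {∅}`. The function `f` is left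
implicit: it can be chosen to be `s ↦ {a | s[a/x] ∈ W}`. -/
structure IsSupplement (V : Set (PAssign A)) (x : ℕ) (W : Set (PAssign A)) : Prop where
  subset_duplicate : W ⊆ duplicate V x
  exists_pupdate_mem : ∀ s ∈ V, ∃ a, pupdate s x a ∈ W

theorem restrictTeam_duplicate (V : Set (PAssign A)) (x : ℕ) (Z : Finset ℕ) :
    restrictTeam (duplicate V x) (insert x Z) = duplicate (restrictTeam V Z) x := by
  ext r
  constructor
  · rintro ⟨_, ⟨s, hs, a, rfl⟩, rfl⟩
    exact ⟨_, ⟨s, hs, rfl⟩, a, restrictP_pupdate_insert s Z x a⟩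
  · rintro ⟨_, ⟨s, hs, rfl⟩, a, rfl⟩
    exact ⟨_, ⟨s, hs, a, rfl⟩, restrictP_pupdate_insert s Z x a⟩

theorem restrictTeam_sep_restrictP_mem (hU : U ⊆ restrictTeam V Z) :
    restrictTeam {t ∈ V | restrictP t Z ∈ U} Z = U :=
  (Set.image_inter_preimage _ V U).trans (Set.inter_eq_right.2 hU)

theorem restrictTeam_sep_duplicate (hx : x ∉ Z) (hU : U ⊆ restrictTeam V Z) (a : A) :
    restrictTeam {t ∈ duplicate V x | t x = some a ∧ restrictP t Z ∈ U} Z = U := by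
  ext r
  constructor
  · rintro ⟨t, ⟨-, -, ht⟩, rfl⟩
    exact ht
  · intro hr
    obtain ⟨s, hs, rfl⟩ := hU hr
    have hrestrict := restrictP_pupdate_of_notMem hx s a
    exact ⟨pupdate s x a, ⟨⟨s, hs, a, rfl⟩, pupdate_self s x a, hrestrict.symm ▸ hr⟩, hrestrict⟩

theorem IsSupplement.restrictTeam_insert (h : IsSupplement V x W) (Z : Finset ℕ) :
    IsSupplement (restrictTeam V Z) x (restrictTeam W (insert x Z)) where
  subset_duplicate :=
    restrictTeam_duplicate V x Z ▸ Set.image_mono h.subset_duplicate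
  exists_pupdate_mem := by
    rintro _ ⟨s, hs, rfl⟩
    obtain ⟨a, ha⟩ := h.exists_pupdate_mem s hs
    exact ⟨a, _, ha, restrictP_pupdate_insert s Z x a⟩

theorem IsSupplement.restrictTeam_eq (h : IsSupplement V x W) (hx : x ∉ Z) :
    restrictTeam W Z = restrictTeam V Z := by
  ext r
  constructor
  · rintro ⟨t, ht, rfl⟩
    obtain ⟨s, hs, a, rfl⟩ := h.subset_duplicate ht
    exact ⟨s, hs, (restrictP_pupdate_of_notMem hx s a).symm⟩
  · rintro ⟨s, hs, rfl⟩
    obtain ⟨a, ha⟩ := h.exists_pupdate_mem s hs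
    exact ⟨_, ha, restrictP_pupdate_of_notMem hx s a⟩

theorem IsSupplement.of_restrictTeam (h : IsSupplement (restrictTeam V Z) x W) :
    IsSupplement V x {t ∈ duplicate V x | restrictP t (insert x Z) ∈ W} where
  subset_duplicate := Set.sep_subset _ _
  exists_pupdate_mem s hs := by
    obtain ⟨a, ha⟩ := h.exists_pupdate_mem _ ⟨s, hs, rfl⟩
    exact ⟨a, ⟨s, hs, a, rfl⟩, (restrictP_pupdate_insert s Z x a).symm ▸ ha⟩

/-- The team `V` is closed under changing the value of `y` to an element of `S`. Together with
`y` taking values in `S`, this says that `V = X[S/y]` for some team `X`. -/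
def UpdateClosed (S : Set A) (y : ℕ) (V : Set (PAssign A)) : Prop :=
  ∀ s ∈ V, ∀ c ∈ S, pupdate s y c ∈ V

theorem UpdateClosed.duplicate {S : Set A} (hV : UpdateClosed S y V) (hxy : x ≠ y) :
    UpdateClosed S y (duplicate V x) := by
  rintro _ ⟨s, hs, a, rfl⟩ c hc
  exact ⟨_, hV s hs c hc, a, pupdate_comm hxy s a c⟩

theorem UpdateClosed.sep {S : Set A} (hV : UpdateClosed S y V) {P : PAssign A → Prop}
    {D : Finset ℕ} (hP : DependsOn P D) (hy : y ∉ D) : UpdateClosed S y {t ∈ V | P t} := by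
  rintro s ⟨hs, hPs⟩ c hc
  have hPc : P (pupdate s y c) = P s :=
    hP fun w hw => pupdate_of_ne (ne_of_mem_of_not_mem (Finset.mem_coe.1 hw) hy) s c
  exact ⟨hV s hs c hc, hPc.symm ▸ hPs⟩

/-- The conditional independence atom `x ⊥_F Q`, with the tuples `F` and `Q` of the syntax replaced
by the sets of their entries. -/
def IndepOver (W : Set (PAssign A)) (F : Finset ℕ) (x : ℕ) (Q : Finset ℕ) : Prop :=
  ∀ s ∈ W, ∀ s' ∈ W, (∀ z ∈ F, s z = s' z) →
    ∃ t ∈ W, t x = s x ∧ (∀ z ∈ F, t z = s z) ∧ ∀ q ∈ Q, t q = s' q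

theorem indepOver_sep_duplicate {P : PAssign A → Prop} {F Q : Finset ℕ}
    (hP : DependsOn P (insert x F : Finset ℕ)) (hx : x ∉ Q) :
    IndepOver {t ∈ duplicate V x | P t} F x Q := by
  rintro _ ⟨⟨s, -, a, rfl⟩, hPs⟩ _ ⟨⟨s', hs', a', rfl⟩, -⟩ hF
  have hagree : ∀ w ∈ insert x F, pupdate s' x a w = pupdate s x a w := by
    grind [pupdate]
  have hPs' : P (pupdate s' x a) = P (pupdate s x a) := hP hagree
  refine ⟨pupdate s' x a, ⟨⟨s', hs', a, rfl⟩, hPs'.symm ▸ hPs⟩, hagree x (by simp),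
    fun z hz => hagree z (by simp [hz]), fun q hq => ?_⟩
  have hqx : q ≠ x := ne_of_mem_of_not_mem hq hx
  rw [pupdate_of_ne hqx, pupdate_of_ne hqx]

/- Independence yields an assignment of `W` with the `x`-value of `s[a/x]` and the `y`-value of
`s[c/y]`; since the variables outside `F ∪ Q` carry no information, it is `s[a/x][c/y]`. -/
theorem UpdateClosed.of_indepOver {S : Set A} {F Q : Finset ℕ} (hV : UpdateClosed S y V)
    (hW : IsSupplement V x W) (hind : IndepOver W F x Q) (hxy : x ≠ y) (hxF : x ∉ F)
    (hyF : y ∉ F) (hyQ : y ∈ Q)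
    (hconst : ∀ w ∉ insert x (F ∪ Q), ∀ s ∈ V, ∀ t ∈ V, s w = t w) : UpdateClosed S y W := by
  intro t ht c hc
  obtain ⟨s, hs, a, rfl⟩ := hW.subset_duplicate ht
  have hsc : pupdate s y c ∈ V := hV s hs c hc
  obtain ⟨a', ha'⟩ := hW.exists_pupdate_mem _ hsc
  obtain ⟨r, hr, hrx, hrF, hrQ⟩ := hind _ ht _ ha' (by grind [pupdate])
  suffices h : pupdate (pupdate s x a) y c = r from h ▸ hr
  obtain ⟨r, hrV, a'', rfl⟩ := hW.subset_duplicate hr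
  funext w
  by_cases hw : w ∈ insert x (F ∪ Q)
  · grind [pupdate]
  · have := hconst w hw r hrV s hs
    grind [pupdate]

/- The disjuncts are told apart by the labels `a ≠ a'` in `v` alone, so that membership in the two
halves does not depend on `y`. -/
theorem exists_isSupplement_of_union_eq {S : Set A} {v : ℕ} {a a' : A} {Q : Finset ℕ}
    {U₀ U₁ : Set (PAssign A)} (hV : UpdateClosed S y V) (ha : a ≠ a') (hvy : v ≠ y) (hy : y ∉ Z)
    (hvZ : v ∉ Z) (hvQ : v ∉ Q) (hU : U₀ ∪ U₁ = restrictTeam V Z) :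
    ∃ W, IsSupplement V v W ∧ IndepOver W Z v Q ∧ UpdateClosed S y W ∧
      (∀ t ∈ W, t v = some a ∨ t v = some a') ∧
      restrictTeam {t ∈ W | t v = some a} Z = U₀ ∧
      restrictTeam {t ∈ W | t v = some a'} Z = U₁ := by
  let P (t : PAssign A) : Prop :=
    (t v = some a ∧ restrictP t Z ∈ U₀) ∨ (t v = some a' ∧ restrictP t Z ∈ U₁)
  have hP : DependsOn P (insert v Z : Finset ℕ) := fun s t h => by
    have hlabel : s v = t v := h v (by simp)
    have hrestrict : restrictP s Z = restrictP t Z :=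
      dependsOn_restrictP Z fun z hz => h z (Finset.mem_insert_of_mem hz)
    simp only [P, hlabel, hrestrict]
  refine ⟨{t ∈ duplicate V v | P t}, ⟨Set.sep_subset _ _, fun s hs => ?_⟩,
    indepOver_sep_duplicate hP hvQ, (hV.duplicate hvy).sep hP (by grind),
    fun t ht => ht.2.imp And.left And.left, ?_, ?_⟩
  · have hrestrict (c : A) := restrictP_pupdate_of_notMem hvZ s c
    obtain hs₀ | hs₁ : restrictP s Z ∈ U₀ ∪ U₁ := hU ▸ ⟨s, hs, rfl⟩
    · exact ⟨a, ⟨s, hs, a, rfl⟩, .inl ⟨pupdate_self s v a, (hrestrict a).symm ▸ hs₀⟩⟩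
    · exact ⟨a', ⟨s, hs, a', rfl⟩, .inr ⟨pupdate_self s v a', (hrestrict a').symm ▸ hs₁⟩⟩
  · refine Eq.trans ?_ (restrictTeam_sep_duplicate hvZ (hU ▸ Set.subset_union_left) a)
    congr 1
    grind
  · refine Eq.trans ?_ (restrictTeam_sep_duplicate hvZ (hU ▸ Set.subset_union_right) a')
    congr 1
    grind

end Teams

section Semantics

variable {σ : Type} {ar : σ → ℕ} {M : TModel σ ar} {V : Set (PAssign M.A)}

theorem tsat_empty (φ : TLForm σ ar) : TSat M ∅ φ := by
  induction φ with
  | and φ ψ ihφ ihψ => exact ⟨ihφ, ihψ⟩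
  | or φ ψ ihφ ihψ => exact ⟨∅, ∅, by simp, by simp, by simp, ihφ, ihψ⟩
  | all x φ ih => simpa [TSat] using ih
  | ex x φ ih => simpa [TSat] using ih
  | _ => simp [TSat]

theorem tsat_all {x : ℕ} {φ : TLForm σ ar} : TSat M V (.all x φ) ↔ TSat M (duplicate V x) φ :=
  Iff.rfl

theorem tsat_ex {x : ℕ} {φ : TLForm σ ar} :
    TSat M V (.ex x φ) ↔ ∃ W, IsSupplement V x W ∧ TSat M W φ := by
  constructor
  · rintro ⟨f, hf, hφ⟩
    refine ⟨_, ⟨?_, fun s hs => ?_⟩, hφ⟩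
    · rintro _ ⟨s, hs, a, -, rfl⟩
      exact ⟨s, hs, a, rfl⟩
    · obtain ⟨a, ha⟩ := hf s hs
      exact ⟨a, s, hs, a, ha, rfl⟩
  · rintro ⟨W, hW, hφ⟩
    refine ⟨fun s => {a | pupdate s x a ∈ W}, hW.exists_pupdate_mem, ?_⟩
    convert hφ using 1
    ext t
    constructor
    · rintro ⟨s, -, a, ha, rfl⟩
      exact ha
    · intro ht
      obtain ⟨s, hs, a, rfl⟩ := hW.subset_duplicate ht
      exact ⟨s, hs, a, ht, rfl⟩

theorem tsat_restrictTeam {Z : Finset ℕ} {φ : TLForm σ ar} (hφ : φ.freeVars ⊆ Z) :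
    TSat M (restrictTeam V Z) φ ↔ TSat M V φ := by
  induction φ generalizing V Z with
  | and φ ψ ihφ ihψ =>
    rw [TLForm.freeVars, Finset.union_subset_iff] at hφ
    exact and_congr (ihφ hφ.1) (ihψ hφ.2)
  | or φ ψ ihφ ihψ =>
    rw [TLForm.freeVars, Finset.union_subset_iff] at hφ
    constructor
    · rintro ⟨U₀, U₁, hU₀, hU₁, hU, h₀, h₁⟩
      refine ⟨{t ∈ V | restrictP t Z ∈ U₀}, {t ∈ V | restrictP t Z ∈ U₁},
        Set.sep_subset _ _, Set.sep_subset _ _, ?_, ?_, ?_⟩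
      · rw [← Set.sep_or]
        exact Set.sep_eq_self_iff_mem_true.2 fun t ht => hU.superset ⟨t, ht, rfl⟩
      · rwa [← ihφ hφ.1, restrictTeam_sep_restrictP_mem hU₀]
      · rwa [← ihψ hφ.2, restrictTeam_sep_restrictP_mem hU₁]
    · rintro ⟨V₀, V₁, hV₀, hV₁, hV, h₀, h₁⟩
      exact ⟨restrictTeam V₀ Z, restrictTeam V₁ Z, Set.image_mono hV₀, Set.image_mono hV₁,
        hV ▸ (Set.image_union _ V₀ V₁).symm, (ihφ hφ.1).2 h₀, (ihψ hφ.2).2 h₁⟩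
  | all x φ ih =>
    rw [TLForm.freeVars, ← Finset.subset_insert_iff] at hφ
    rw [tsat_all, tsat_all, ← restrictTeam_duplicate, ih hφ]
  | ex x φ ih =>
    rw [TLForm.freeVars, ← Finset.subset_insert_iff] at hφ
    rw [tsat_ex, tsat_ex]
    constructor
    · rintro ⟨U, hU, h⟩
      have hsub : U ⊆ restrictTeam (duplicate V x) (insert x Z) :=
        restrictTeam_duplicate V x Z ▸ hU.subset_duplicate
      exact ⟨_, hU.of_restrictTeam, by rwa [← ih hφ, restrictTeam_sep_restrictP_mem hsub]⟩
    · rintro ⟨W, hW, h⟩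
      exact ⟨_, hW.restrictTeam_insert Z, (ih hφ).2 h⟩
  | _ =>
    simp only [TLForm.freeVars, Finset.union_subset_iff, Finset.insert_subset_iff,
      Finset.singleton_subset_iff, Finset.image_subset_iff, Finset.mem_univ, forall_const] at hφ
    simp [TSat, restrictTeam, restrictP, hφ]

theorem tsat_eq_iff_of_eq_some {v u : ℕ} {a : M.A} (hu : ∀ t ∈ V, t u = some a) :
    TSat M V (.eq v u) ↔ ∀ t ∈ V, t v = some a :=
  forall₂_congr fun t ht => by simp [hu t ht]

theorem tsat_or_and_eq_iff {v u u' : ℕ} {a a' : M.A} (ha : a ≠ a') (hu : ∀ t ∈ V, t u = some a)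
    (hu' : ∀ t ∈ V, t u' = some a') {φ ψ : TLForm σ ar} :
    TSat M V (.or (.and φ (.eq v u)) (.and ψ (.eq v u'))) ↔
      (∀ t ∈ V, t v = some a ∨ t v = some a') ∧
        TSat M {t ∈ V | t v = some a} φ ∧ TSat M {t ∈ V | t v = some a'} ψ := by
  constructor
  · rintro ⟨V₀, V₁, h₀, h₁, rfl, ⟨hφ, hv⟩, hψ, hv'⟩
    rw [tsat_eq_iff_of_eq_some fun t ht => hu t (h₀ ht)] at hv
    rw [tsat_eq_iff_of_eq_some fun t ht => hu' t (h₁ ht)] at hv'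
    have hV₀ : {t ∈ V₀ ∪ V₁ | t v = some a} = V₀ := by
      ext t
      grind
    have hV₁ : {t ∈ V₀ ∪ V₁ | t v = some a'} = V₁ := by
      ext t
      grind
    rw [hV₀, hV₁]
    exact ⟨fun t ht => ht.imp (hv t) (hv' t), hφ, hψ⟩
  · rintro ⟨hv, hφ, hψ⟩
    refine ⟨_, _, Set.sep_subset _ _, Set.sep_subset _ _, ?_, ⟨hφ, ?_⟩, hψ, ?_⟩
    · rw [← Set.sep_or]
      exact Set.sep_eq_self_iff_mem_true.2 hv
    · exact (tsat_eq_iff_of_eq_some fun t ht => hu t ht.1).2 fun t ht => ht.2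
    · exact (tsat_eq_iff_of_eq_some fun t ht => hu' t ht.1).2 fun t ht => ht.2

/-- Satisfaction in the expansion `(𝔄, Y ↦ S)`. The domain of the expansion is only definitionally
that of `𝔄`; teams are kept over the latter, so that they are syntactically teams over `𝔄`. -/
def TSatY (M : TModel σ ar) (S : Set M.A) (V : Set (PAssign M.A))
    (φ : TLForm (σ ⊕ Unit) (arY ar)) : Prop :=
  TSat (expandY M S) V φ

section Expansion

variable {S : Set M.A} {φ ψ : TLForm (σ ⊕ Unit) (arY ar)}

theorem tsatY_all {x : ℕ} : TSatY M S V (.all x φ) ↔ TSatY M S (duplicate V x) φ :=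
  Iff.rfl

theorem tsatY_ex {x : ℕ} :
    TSatY M S V (.ex x φ) ↔ ∃ W, IsSupplement V x W ∧ TSatY M S W φ :=
  tsat_ex (M := expandY M S)

theorem tsatY_or : TSatY M S V (.or φ ψ) ↔
    ∃ U₀ U₁, U₀ ∪ U₁ = V ∧ TSatY M S U₀ φ ∧ TSatY M S U₁ ψ := by
  constructor
  · rintro ⟨U₀, U₁, -, -, hU, hφ, hψ⟩
    exact ⟨U₀, U₁, hU, hφ, hψ⟩
  · rintro ⟨U₀, U₁, rfl, hφ, hψ⟩
    exact ⟨U₀, U₁, Set.subset_union_left, Set.subset_union_right, rfl, hφ, hψ⟩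

theorem tsatY_rel_inr {j : Unit} {ts : Fin (arY ar (Sum.inr j)) → ℕ} :
    TSatY M S V (.rel (Sum.inr j) ts) ↔
      ∀ s ∈ V, ∃ c ∈ S, s (ts ⟨0, Nat.one_pos⟩) = some c :=
  forall₂_congr fun _ _ =>
    ⟨fun ⟨_, hw, hS⟩ => ⟨_, hS, hw _⟩,
      fun ⟨c, hc, hs⟩ => ⟨fun _ => c, Fin.forall_fin_one.2 hs, hc⟩⟩

theorem tsatY_nrel_inr {j : Unit} {ts : Fin (arY ar (Sum.inr j)) → ℕ} :
    TSatY M S V (.nrel (Sum.inr j) ts) ↔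
      ∀ s ∈ V, ∃ c ∉ S, s (ts ⟨0, Nat.one_pos⟩) = some c :=
  forall₂_congr fun _ _ =>
    ⟨fun ⟨_, hw, hS⟩ => ⟨_, hS, hw _⟩,
      fun ⟨c, hc, hs⟩ => ⟨fun _ => c, Fin.forall_fin_one.2 hs, hc⟩⟩

end Expansion

/-- The parameters of the translation whose values may differ between the assignments of a
suitable team: the fibre variable `y`, and the label `v` below a disjunction. -/
def varyingParams (y v : ℕ) (b : Bool) : Finset ℕ :=
  if b then {y, v} else {y}

theorem mem_varyingParams {y v w : ℕ} {b : Bool} :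
    w ∈ varyingParams y v b ↔ w = y ∨ b ∧ w = v := by
  cases b <;> simp [varyingParams]

theorem tsat_cindep_sort_get {F : Finset ℕ} {x k : ℕ} {ys : Fin k → ℕ} :
    TSat M V (.cindep 1 _ k (fun _ => x) (F.sort (· ≤ ·)).get ys) ↔
      IndepOver V F x (Finset.univ.image ys) := by
  have forall_get (p : ℕ → Prop) :
      (∀ i, p ((F.sort (· ≤ ·)).get i)) ↔ ∀ z ∈ F, p z := by
    rw [← List.forall_mem_iff_get]
    simp only [Finset.mem_sort]
  simp only [TSat, IndepOver, forall_get fun _ => _ = _, forall_const, Finset.forall_mem_image,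
    Finset.mem_univ]

theorem tsat_Ttr_ex {y v u u' x : ℕ} {Z : Finset ℕ} {b : Bool}
    {φ : TLForm (σ ⊕ Unit) (arY ar)} :
    TSat M V (Ttr y v u u' Z b (.ex x φ)) ↔
      ∃ W, IsSupplement V x W ∧ IndepOver W (Z.erase x) x (varyingParams y v b) ∧
        TSat M W (Ttr y v u u' (insert x Z) b φ) := by
  have himage : Finset.univ.image (fun i : Fin 2 => if i.val = 0 then y else v) = {y, v} := by
    ext
    simp [Fin.exists_fin_two, eq_comm]
  cases b <;> refine tsat_ex.trans (exists_congr fun W => and_congr_right fun _ =>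
    and_congr_left fun _ => tsat_cindep_sort_get.trans ?_)
  · rfl
  · rw [himage]
    rfl

theorem tsat_Ttr_or {y v u u' : ℕ} {Z : Finset ℕ} {b : Bool} {a a' : M.A}
    (hvu : v ≠ u) (hvu' : v ≠ u') (ha : a ≠ a') (hu : ∀ s ∈ V, s u = some a)
    (hu' : ∀ s ∈ V, s u' = some a') {φ ψ : TLForm (σ ⊕ Unit) (arY ar)} :
    TSat M V (Ttr y v u u' Z b (.or φ ψ)) ↔
      ∃ W, IsSupplement V v W ∧ IndepOver W Z v {y} ∧
        (∀ t ∈ W, t v = some a ∨ t v = some a') ∧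
        TSat M {t ∈ W | t v = some a} (Ttr y v u u' Z true φ) ∧
        TSat M {t ∈ W | t v = some a'} (Ttr y v u u' Z true ψ) := by
  refine tsat_ex.trans (exists_congr fun W => and_congr_right fun hW =>
    and_congr tsat_cindep_sort_get (tsat_or_and_eq_iff ha (fun t ht => ?_) (fun t ht => ?_)))
  · obtain ⟨s, hs, c, rfl⟩ := hW.subset_duplicate ht
    exact (pupdate_of_ne hvu.symm s c).trans (hu s hs)
  · obtain ⟨s, hs, c, rfl⟩ := hW.subset_duplicate ht
    exact (pupdate_of_ne hvu'.symm s c).trans (hu' s hs)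

end Semantics

section Suitable

/-- The conditions on the second component `V` of a suitable pair, for given values `a ≠ a'` of
`u`, `u'`. The domain of `V` is recorded only through its consequences: the variables in `Z` have
values, and those outside `Z` and the varying parameters `Q` are constant on `V`, where being
undefined counts as having the value `none`. -/
structure SuitableTeam {A : Type} (S : Set A) (y u u' : ℕ) (a a' : A) (Z Q : Finset ℕ)
    (V : Set (PAssign A)) : Prop where
  ne : a ≠ a'
  eq_left : ∀ s ∈ V, s u = some a
  eq_right : ∀ s ∈ V, s u' = some a'
  exists_eq_some : ∀ s ∈ V, ∀ z ∈ Z, ∃ c, s z = some c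
  const : ∀ w ∉ Z ∪ Q, ∀ s ∈ V, ∀ t ∈ V, s w = t w
  updateClosed : UpdateClosed S y V
  exists_mem_eq_some : ∀ s ∈ V, ∃ c ∈ S, s y = some c

variable {A : Type} {S : Set A} {y v u u' : ℕ} {a a' : A} {Z Q : Finset ℕ} {b : Bool}
  {U V W : Set (PAssign A)}

theorem SuitablePair.exists_suitableTeam (h : SuitablePair A S y v u u' Z b U V)
    (hV : V.Nonempty) : ∃ a a', SuitableTeam S y u u' a a' Z (varyingParams y v b) V := by
  obtain ⟨-, hdom, -, ⟨X, hX⟩, hagree⟩ := h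
  obtain ⟨s₀, hs₀⟩ := hV
  obtain ⟨a, ha⟩ : ∃ a, s₀ u = some a :=
    Option.ne_none_iff_exists'.1 ((hdom s₀ hs₀ u).2 (by cases b <;> simp))
  obtain ⟨a', ha'⟩ : ∃ a', s₀ u' = some a' :=
    Option.ne_none_iff_exists'.1 ((hdom s₀ hs₀ u').2 (by cases b <;> simp))
  refine ⟨a, a', ?_, fun s hs => ?_, fun s hs => ?_, fun s hs z hz => ?_,
    fun w hw s hs t ht => ?_, ?_, ?_⟩
  · have := (hagree s₀ hs₀ s₀ hs₀).2.1
    grind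
  · exact (hagree s hs s₀ hs₀).1.trans ha
  · exact (hagree s hs s₀ hs₀).2.2.symm.trans ha'
  · exact Option.ne_none_iff_exists'.1 ((hdom s hs z).2 (by cases b <;> simp [hz]))
  · have hs_agree := hagree s hs t ht
    have hs_dom := hdom s hs w
    have ht_dom := hdom t ht w
    grind [varyingParams]
  · subst hX
    rintro _ ⟨s, hs, c, -, rfl⟩ d hd
    exact ⟨s, hs, d, hd, pupdate_idem s y c d⟩
  · subst hX
    rintro _ ⟨s, -, c, hc, rfl⟩
    exact ⟨c, hc, pupdate_self s y c⟩

namespace SuitableTeam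

theorem of_subset_duplicate (hV : SuitableTeam S y u u' a a' Z Q V) {x : ℕ} {Z' Q' : Finset ℕ}
    (hxy : x ≠ y) (hxu : x ≠ u) (hxu' : x ≠ u') (hZ' : Z' ⊆ insert x Z)
    (hQ' : insert x (Z ∪ Q) ⊆ Z' ∪ Q') (hW : W ⊆ duplicate V x) (hcl : UpdateClosed S y W) :
    SuitableTeam S y u u' a a' Z' Q' W where
  ne := hV.ne
  eq_left t ht := by
    obtain ⟨s, hs, c, rfl⟩ := hW ht
    exact (pupdate_of_ne hxu.symm s c).trans (hV.eq_left s hs)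
  eq_right t ht := by
    obtain ⟨s, hs, c, rfl⟩ := hW ht
    exact (pupdate_of_ne hxu'.symm s c).trans (hV.eq_right s hs)
  exists_eq_some t ht z hz := by
    obtain ⟨s, hs, c, rfl⟩ := hW ht
    obtain rfl | hzZ := Finset.mem_insert.1 (hZ' hz)
    · exact ⟨c, pupdate_self s z c⟩
    · have := hV.exists_eq_some s hs z hzZ
      grind [pupdate]
  const w hw t ht t' ht' := by
    obtain ⟨s, hs, c, rfl⟩ := hW ht
    obtain ⟨s', hs', c', rfl⟩ := hW ht'
    have hw' : w ∉ insert x (Z ∪ Q) := fun h => hw (hQ' h)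
    have hwx : w ≠ x := fun h => hw' (h ▸ Finset.mem_insert_self _ _)
    rw [pupdate_of_ne hwx, pupdate_of_ne hwx]
    exact hV.const w (fun h => hw' (Finset.mem_insert_of_mem h)) s hs s' hs'
  updateClosed := hcl
  exists_mem_eq_some t ht := by
    obtain ⟨s, hs, c, rfl⟩ := hW ht
    rw [pupdate_of_ne hxy.symm]
    exact hV.exists_mem_eq_some s hs

theorem exists_eq_iff (hV : SuitableTeam S y u u' a a' Z Q V) (hne : V.Nonempty) {o : Option A} :
    (∃ t ∈ V, t y = o) ↔ ∃ c ∈ S, o = some c := by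
  constructor
  · rintro ⟨t, ht, rfl⟩
    exact hV.exists_mem_eq_some t ht
  · rintro ⟨c, hc, rfl⟩
    obtain ⟨s, hs⟩ := hne
    exact ⟨_, hV.updateClosed s hs c hc, pupdate_self s y c⟩

end SuitableTeam

end Suitable

section Translation

variable {σ : Type} {ar : σ → ℕ} {M : TModel σ ar} {S : Set M.A} {y v u u' x : ℕ} {a a' : M.A}
  {Z Q : Finset ℕ} {b : Bool} {V : Set (PAssign M.A)} {φ ψ : TLForm (σ ⊕ Unit) (arY ar)}

namespace SuitableTeam

theorem tsatY_rel_inr_iff (hV : SuitableTeam S y u u' a a' Z Q V) {j : Unit}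
    {ts : Fin (arY ar (Sum.inr j)) → ℕ} (hts : ∀ i, ts i ∈ Z) :
    TSatY M S (restrictTeam V Z) (.rel (Sum.inr j) ts) ↔
      TSat M V (Ttr y v u u' Z b (.rel (Sum.inr j) ts)) := by
  rw [tsatY_rel_inr]
  refine Set.forall_mem_image.trans (forall₂_congr fun s hs => ?_)
  rw [restrictP_of_mem (hts _), ← hV.exists_eq_iff ⟨s, hs⟩]
  simp only [forall_const]

theorem tsatY_nrel_inr_iff (hV : SuitableTeam S y u u' a a' Z Q V) {j : Unit}
    {ts : Fin (arY ar (Sum.inr j)) → ℕ} (hts : ∀ i, ts i ∈ Z) :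
    TSatY M S (restrictTeam V Z) (.nrel (Sum.inr j) ts) ↔
      TSat M V (Ttr y v u u' Z b (.nrel (Sum.inr j) ts)) := by
  rw [tsatY_nrel_inr]
  refine Set.forall_mem_image.trans (forall₂_congr fun s hs => ?_)
  obtain ⟨c, hc⟩ := hV.exists_eq_some s hs _ (hts ⟨0, Nat.one_pos⟩)
  have hcS : (∃ t ∈ V, t y = some c) ↔ c ∈ S := by
    simp [hV.exists_eq_iff ⟨s, hs⟩]
  simp only [restrictP_of_mem (hts _), hc, forall_const, Option.some.injEq, exists_eq_right',
    ← hcS]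
  grind

theorem tsatY_all_iff (hV : SuitableTeam S y u u' a a' Z (varyingParams y v b) V)
    (hxy : x ≠ y) (hxu : x ≠ u) (hxu' : x ≠ u')
    (ih : ∀ W, SuitableTeam S y u u' a a' (insert x Z) (varyingParams y v b) W →
      (TSatY M S (restrictTeam W (insert x Z)) φ ↔
        TSat M W (Ttr y v u u' (insert x Z) b φ))) :
    TSatY M S (restrictTeam V Z) (.all x φ) ↔ TSat M V (Ttr y v u u' Z b (.all x φ)) := by
  rw [tsatY_all, ← restrictTeam_duplicate]
  exact ih _ (hV.of_subset_duplicate hxy hxu hxu' subset_rfl (Finset.insert_union ..).superset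
    subset_rfl (hV.updateClosed.duplicate hxy))

theorem tsatY_ex_iff (hV : SuitableTeam S y u u' a a' Z (varyingParams y v b) V)
    (hxy : x ≠ y) (hxv : x ≠ v) (hxu : x ≠ u) (hxu' : x ≠ u') (hy : y ∉ Z)
    (ih : ∀ W, SuitableTeam S y u u' a a' (insert x Z) (varyingParams y v b) W →
      (TSatY M S (restrictTeam W (insert x Z)) φ ↔
        TSat M W (Ttr y v u u' (insert x Z) b φ))) :
    TSatY M S (restrictTeam V Z) (.ex x φ) ↔ TSat M V (Ttr y v u u' Z b (.ex x φ)) := by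
  have hsuit {W} (hW : IsSupplement V x W) (hcl : UpdateClosed S y W) :
      SuitableTeam S y u u' a a' (insert x Z) (varyingParams y v b) W :=
    hV.of_subset_duplicate hxy hxu hxu' subset_rfl (Finset.insert_union ..).superset
      hW.subset_duplicate hcl
  rw [tsatY_ex, tsat_Ttr_ex]
  constructor
  · rintro ⟨U, hU, hφ⟩
    have hdep : DependsOn (fun t => restrictP t (insert x Z) ∈ U) (insert x Z : Finset ℕ) :=
      fun _ _ h => congrArg (· ∈ U) (dependsOn_restrictP _ h)
    have hinsert : insert x Z = insert x (Z.erase x) := by grind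
    have hx : x ∉ varyingParams y v b := by grind [mem_varyingParams]
    have hcl := (hV.updateClosed.duplicate hxy).sep hdep (by grind)
    refine ⟨_, hU.of_restrictTeam, ?_, (ih _ (hsuit hU.of_restrictTeam hcl)).1 ?_⟩
    · exact indepOver_sep_duplicate (hinsert ▸ hdep) hx
    · rwa [restrictTeam_sep_restrictP_mem]
      exact restrictTeam_duplicate V x Z ▸ hU.subset_duplicate
  · rintro ⟨W, hW, hind, hφ⟩
    have hcl : UpdateClosed S y W := by
      refine hV.updateClosed.of_indepOver hW hind hxy (Finset.notMem_erase x Z) (by grind)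
        (mem_varyingParams.2 (.inl rfl)) fun w hw => hV.const w (by grind)
    exact ⟨_, hW.restrictTeam_insert Z, (ih W (hsuit hW hcl)).2 hφ⟩

theorem tsatY_or_iff (hV : SuitableTeam S y u u' a a' Z (varyingParams y v b) V)
    (hvy : v ≠ y) (hvu : v ≠ u) (hvu' : v ≠ u') (hy : y ∉ Z) (hv : v ∉ Z)
    (ihφ : ∀ W, SuitableTeam S y u u' a a' Z (varyingParams y v true) W →
      (TSatY M S (restrictTeam W Z) φ ↔ TSat M W (Ttr y v u u' Z true φ)))
    (ihψ : ∀ W, SuitableTeam S y u u' a a' Z (varyingParams y v true) W →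
      (TSatY M S (restrictTeam W Z) ψ ↔ TSat M W (Ttr y v u u' Z true ψ))) :
    TSatY M S (restrictTeam V Z) (.or φ ψ) ↔ TSat M V (Ttr y v u u' Z b (.or φ ψ)) := by
  have hsuit {W} (hW : IsSupplement V v W) (hcl : UpdateClosed S y W) (c : M.A) :
      SuitableTeam S y u u' a a' Z (varyingParams y v true) {t ∈ W | t v = some c} := by
    have hdep : DependsOn (fun t : PAssign M.A => t v = some c) ({v} : Finset ℕ) :=
      fun _ _ h => congrArg (· = some c) (h v (by simp))
    exact hV.of_subset_duplicate hvy hvu hvu' (Finset.subset_insert _ _)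
      (by grind [mem_varyingParams]) ((Set.sep_subset _ _).trans hW.subset_duplicate)
      (hcl.sep hdep (by simpa using hvy.symm))
  rw [tsatY_or, tsat_Ttr_or hvu hvu' hV.ne hV.eq_left hV.eq_right]
  constructor
  · rintro ⟨U₀, U₁, hU, hφ, hψ⟩
    obtain ⟨W, hW, hind, hcl, hlabel, rfl, rfl⟩ :=
      exists_isSupplement_of_union_eq hV.updateClosed hV.ne hvy hy hv
        (by simpa using hvy : v ∉ {y}) hU
    exact ⟨W, hW, hind, hlabel, (ihφ _ (hsuit hW hcl a)).1 hφ, (ihψ _ (hsuit hW hcl a')).1 hψ⟩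
  · rintro ⟨W, hW, hind, hlabel, hφ, hψ⟩
    have hcl : UpdateClosed S y W :=
      hV.updateClosed.of_indepOver hW hind hvy hv hy (Finset.mem_singleton_self y)
        fun w hw => hV.const w (by grind [mem_varyingParams])
    refine ⟨_, _, ?_, (ihφ _ (hsuit hW hcl a)).2 hφ, (ihψ _ (hsuit hW hcl a')).2 hψ⟩
    have hunion : {t ∈ W | t v = some a} ∪ {t ∈ W | t v = some a'} = W := by
      rw [← Set.sep_or]
      exact Set.sep_eq_self_iff_mem_true.2 hlabel
    rw [restrictTeam, restrictTeam, ← Set.image_union, hunion]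
    exact hW.restrictTeam_eq hv

theorem tsatY_iff (hV : SuitableTeam S y u u' a a' Z (varyingParams y v b) V)
    (hvy : v ≠ y) (hvu : v ≠ u) (hvu' : v ≠ u') (hy : y ∉ Z) (hv : v ∉ Z)
    (hfree : φ.freeVars ⊆ Z) (hfresh : Disjoint {y, v, u, u'} φ.vars) :
    TSatY M S (restrictTeam V Z) φ ↔ TSat M V (Ttr y v u u' Z b φ) := by
  induction φ generalizing Z b V with
  | rel R ts =>
    rcases R with R | j
    · exact tsat_restrictTeam (φ := .rel R ts) hfree
    · exact hV.tsatY_rel_inr_iff fun i => hfree (by simp [TLForm.freeVars])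
  | nrel R ts =>
    rcases R with R | j
    · exact tsat_restrictTeam (φ := .nrel R ts) hfree
    · exact hV.tsatY_nrel_inr_iff fun i => hfree (by simp [TLForm.freeVars])
  | eq x z => exact tsat_restrictTeam (φ := .eq x z) hfree
  | neq x z => exact tsat_restrictTeam (φ := .neq x z) hfree
  | dep k xs x => exact tsat_restrictTeam (φ := .dep k xs x) hfree
  | incl k xs ys => exact tsat_restrictTeam (φ := .incl k xs ys) hfree
  | excl k xs ys => exact tsat_restrictTeam (φ := .excl k xs ys) hfree
  | cindep k m p xs zs ys => exact tsat_restrictTeam (φ := .cindep k m p xs zs ys) hfree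
  | and φ ψ ihφ ihψ =>
    simp only [TLForm.freeVars, TLForm.vars, Finset.union_subset_iff,
      Finset.disjoint_union_right] at hfree hfresh
    exact and_congr (ihφ hV hy hv hfree.1 hfresh.1) (ihψ hV hy hv hfree.2 hfresh.2)
  | or φ ψ ihφ ihψ =>
    simp only [TLForm.freeVars, TLForm.vars, Finset.union_subset_iff,
      Finset.disjoint_union_right] at hfree hfresh
    exact hV.tsatY_or_iff hvy hvu hvu' hy hv (fun W hW => ihφ hW hy hv hfree.1 hfresh.1)
      fun W hW => ihψ hW hy hv hfree.2 hfresh.2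
  | all x φ ih =>
    simp only [TLForm.freeVars, TLForm.vars, Finset.disjoint_insert_right,
      ← Finset.subset_insert_iff] at hfree hfresh
    obtain ⟨hx, hfresh⟩ := hfresh
    exact hV.tsatY_all_iff (by grind) (by grind) (by grind)
      fun W hW => ih hW (by grind) (by grind) hfree hfresh
  | ex x φ ih =>
    simp only [TLForm.freeVars, TLForm.vars, Finset.disjoint_insert_right,
      ← Finset.subset_insert_iff] at hfree hfresh
    obtain ⟨hx, hfresh⟩ := hfresh
    exact hV.tsatY_ex_iff (by grind) (by grind) (by grind) (by grind) hy
      fun W hW => ih hW (by grind) (by grind) hfree hfresh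

end SuitableTeam

end Translation

theorem stmt8_general {σ : Type} {ar : σ → ℕ} (M : TModel σ ar) (S : Set M.A)
    (φ : TLForm (σ ⊕ Unit) (arY ar)) (y v u u' : ℕ) (hvy : v ≠ y) (hvu : v ≠ u) (hvu' : v ≠ u')
    (hfresh : Disjoint {y, v, u, u'} φ.vars) (Z : Finset ℕ) (hy : y ∉ Z) (hv : v ∉ Z)
    (hfree : φ.freeVars ⊆ Z) (b : Bool) (U V : Set (PAssign M.A))
    (hsuit : SuitablePair M.A S y v u u' Z b U V) :
    TSat (expandY M S) U φ ↔ TSat M V (Ttr y v u u' Z b φ) := by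
  obtain rfl : U = restrictTeam V Z := hsuit.2.2.1
  rcases V.eq_empty_or_nonempty with rfl | hne
  · rw [restrictTeam, Set.image_empty]
    exact iff_of_true (tsat_empty _) (tsat_empty _)
  · obtain ⟨a, a', hV⟩ := hsuit.exists_suitableTeam hne
    exact hV.tsatY_iff hvy hvu hvu' hy hv hfree hfresh

/-- Lemma 7 of the paper.  Let `χ` be a sentence of dependence logic not containing the
variables `y,v,u,u'`, let `𝔄` be a model with at least two elements, let `Y` be a unary
relation symbol occurring neither in `χ` nor in the vocabulary of `𝔄`, and let `S ⊆ A`.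
If `({∅},V)` is a suitable pair for `𝔄`, `S`, `(y,v,u,u')` and `(χ,χ)`, then
`(𝔄,Y↦S),{∅} ⊨ χ` iff `𝔄,V ⊨ T_Y^y(χ)`. -/
theorem stmt8 (σ : Type) (ar : σ → ℕ) (M : TModel σ ar)
    (htwo : ∃ a b : M.A, a ≠ b)
    (S : Set M.A)
    (χ : TLForm (σ ⊕ Unit) (arY ar))
    (hDL : χ.IsDL) (hsent : χ.freeVars = ∅)
    (hY : ¬ χ.UsesRel (Sum.inr ()))
    (y v u u' : ℕ)
    (hdist : y ≠ v ∧ y ≠ u ∧ y ≠ u' ∧ v ≠ u ∧ v ≠ u' ∧ u ≠ u')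
    (hfresh : y ∉ χ.vars ∧ v ∉ χ.vars ∧ u ∉ χ.vars ∧ u' ∉ χ.vars)
    (V : Set (PAssign M.A))
    (hsuit : SuitablePair M.A S y v u u' ∅ false {emptyA} V) :
    TSat (expandY M S) {(emptyA : PAssign M.A)} χ ↔ TSat M V (Ttr y v u u' ∅ false χ) := by
  exact stmt8_general M S χ y v u u' hdist.1.symm hdist.2.2.2.1 hdist.2.2.2.2.1
    (by simpa using hfresh) ∅ (by simp) (by simp) hsent.subset false {emptyA} V hsuit
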